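/- (Extended Cohn–Lempel equality, connected case) Let w be a double occurrence word on n ≥ 1 vertices and let t be any transition assignment. Then the number of orbits of the dart permutation τ_t equals 2·(ν(I_t(w)) + 1); equivalently, the circuit partition P_t determined by t satisfies |P_t| = ν(I_t(w)) + 1. -/

import Mathlib

/-!
Label the edges of the word by elements of `GF(2)`, and consider the labellings `f` that are
constant on each circuit of `P_t`; there are `2 ^ |P_t|` of them (`card_invariant`).  Whatever the
transition at a vertex `v` is, such an `f` changes by the same amount `x v` at the two passages of
the word through `v`, and `x v = 0` if `t v = follow`.  Hence `f` is recovered from `x` and its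
value on the last edge by summation along the word (`potential`); conversely the sum of any `x`
closes up, as every vertex occurs twice.

Between the two occurrences of `v` the labelling changes by `x v` plus the sum of `x u` over the
vertices `u` interlaced with `v` (`potential_diff`).  The conditions at `v` for being constant on
circuits, namely `f b = f a` for `reverse` and `f b = f (a - 1)` for `cross`, therefore say
precisely that the row `v` of `I_t(w)` annihilates `x` (`potential_invariant_iff`).  So
`2 ^ |P_t| = 2 * 2 ^ ν(I_t(w))`.

Finally, each circuit is traversed by exactly two orbits of darts, because reversal of darts
conjugates `τ` to its inverse and no orbit contains a dart and its reverse
(`orbitCount_eq_two_mul`).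
-/

open scoped Classical

/-- The GF(2)-nullity of a square matrix: number of columns minus rank. -/
noncomputable def nullity {ι : Type*} [Fintype ι] (M : Matrix ι ι (ZMod 2)) : ℕ :=
  Fintype.card ι - M.rank

/-- The setoid on `α` whose classes are the orbits (cycles, including fixed points)
of a permutation. -/
def sameCycleSetoid {α : Type*} (π : Equiv.Perm α) : Setoid α :=
  ⟨π.SameCycle, ⟨fun x => Equiv.Perm.SameCycle.refl π x, fun h => h.symm, fun h h' => h.trans h'⟩⟩

/-- The number of orbits of a permutation (fixed points count as orbits). -/
noncomputable def orbitCount {α : Type*} (π : Equiv.Perm α) : ℕ :=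
  Nat.card (Quotient (sameCycleSetoid π))

/-- A double occurrence word on `n` vertices: a map from the `2n` cyclic positions to the
vertices in which every vertex occurs at exactly two positions. -/
def DoubleOccurrence {n : ℕ} (w : Fin (2 * n) → Fin n) : Prop :=
  ∀ v : Fin n, (Finset.univ.filter fun p => w p = v).card = 2

/-- Distinct vertices `u` and `v` are interlaced in `w` when the two occurrences of `v` lie
in different cyclic arcs determined by the two occurrences of `u`; cutting the cycle at
position `0`, this says that exactly one occurrence of `v` lies strictly between the two
occurrences of `u`. -/
def Interlaced {n : ℕ} (w : Fin (2 * n) → Fin n) (u v : Fin n) : Prop :=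
  u ≠ v ∧ ∀ p q : Fin (2 * n), p < q → w p = u → w q = u →
    (Finset.univ.filter fun r => p < r ∧ r < q ∧ w r = v).card = 1

/-- The interlace matrix of a double occurrence word: the `(u,v)` entry is `1` iff `u ≠ v`
and `u`, `v` are interlaced; the diagonal entries are `0`. -/
noncomputable def interlaceMatrix {n : ℕ} (w : Fin (2 * n) → Fin n) :
    Matrix (Fin n) (Fin n) (ZMod 2) :=
  Matrix.of fun u v => if Interlaced w u v then 1 else 0

/-- A transition at a vertex: follow the word, cross it consistently with its orientation,
or reverse orientation. -/
inductive Transition : Type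
  | follow : Transition
  | cross : Transition
  | reverse : Transition
deriving DecidableEq

/-- The matrix `I_t(w)`: delete the rows/columns of the vertices where `t` is `follow`,
and put diagonal entry `1` at the vertices where `t` is `reverse` (and `0` where `t` is
`cross`); off-diagonal entries record interlacement in `w`. -/
noncomputable def transMatrix {n : ℕ} (w : Fin (2 * n) → Fin n) (t : Fin n → Transition) :
    Matrix {v : Fin n // t v ≠ Transition.follow} {v : Fin n // t v ≠ Transition.follow}
      (ZMod 2) :=
  Matrix.of fun u v =>
    if u = v then (if t u.1 = Transition.reverse then 1 else 0)
    else if Interlaced w u.1 v.1 then 1 else 0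

/-- The position `1` in `Fin (2n)`, for `n ≥ 1`. -/
def pos1 {n : ℕ} (hn : 0 < n) : Fin (2 * n) := ⟨1, by omega⟩

/-- `τ` is the dart permutation determined by the transition assignment `t` on the double
occurrence word `w`: darts are pairs `(p, ε)` with `ε = true` the traversal of the edge
`e_p` from `w(p)` to `w(p+1)` and `ε = false` its reverse, and for each vertex `v`
occurring at positions `a` and `b` the images of the four darts arriving at `v` are as
prescribed by `t v`. -/
def IsDartPerm {n : ℕ} (hn : 0 < n) (w : Fin (2 * n) → Fin n) (t : Fin n → Transition)
    (τ : Equiv.Perm (Fin (2 * n) × Bool)) : Prop :=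
  ∀ (v : Fin n) (a b : Fin (2 * n)), a ≠ b → w a = v → w b = v →
    (t v = Transition.follow →
      τ (a - pos1 hn, true) = (a, true) ∧ τ (b - pos1 hn, true) = (b, true) ∧
      τ (a, false) = (a - pos1 hn, false) ∧ τ (b, false) = (b - pos1 hn, false)) ∧
    (t v = Transition.cross →
      τ (a - pos1 hn, true) = (b, true) ∧ τ (b - pos1 hn, true) = (a, true) ∧
      τ (a, false) = (b - pos1 hn, false) ∧ τ (b, false) = (a - pos1 hn, false)) ∧
    (t v = Transition.reverse →
      τ (a - pos1 hn, true) = (b - pos1 hn, false) ∧ τ (b - pos1 hn, true) = (a - pos1 hn, false) ∧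
      τ (a, false) = (b, true) ∧ τ (b, false) = (a, true))

/-! ### Orbits of darts and circuits -/

section DartReversal

variable {α : Type*}

/-- Reversal of darts, as a permutation. -/
def dartRev (α : Type*) : Equiv.Perm (α × Bool) where
  toFun d := (d.1, !d.2)
  invFun d := (d.1, !d.2)
  left_inv d := by simp
  right_inv d := by simp

lemma dartRev_apply (d : α × Bool) : dartRev α d = (d.1, !d.2) := rfl

lemma dartRev_conj {τ : Equiv.Perm (α × Bool)}
    (hrev : ∀ d, τ (dartRev α (τ d)) = dartRev α d) :
    dartRev α * τ * (dartRev α)⁻¹ = τ⁻¹ := by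
  rw [mul_inv_eq_iff_eq_mul]
  ext1 d
  simp only [Equiv.Perm.mul_apply]
  rw [Equiv.Perm.eq_inv_iff_eq, hrev]

lemma dartRev_zpow {τ : Equiv.Perm (α × Bool)}
    (hrev : ∀ d, τ (dartRev α (τ d)) = dartRev α d) (j : ℤ) (d : α × Bool) :
    dartRev α ((τ ^ j) d) = (τ ^ (-j)) (dartRev α d) := by
  have h : dartRev α * τ ^ j * (dartRev α)⁻¹ = τ ^ (-j) := by
    rw [← conj_zpow, dartRev_conj hrev, inv_zpow, zpow_neg]
  rw [mul_inv_eq_iff_eq_mul] at h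
  exact congrArg (fun σ : Equiv.Perm (α × Bool) => σ d) h

lemma sameCycle_dartRev {τ : Equiv.Perm (α × Bool)}
    (hrev : ∀ d, τ (dartRev α (τ d)) = dartRev α d) {d e : α × Bool}
    (h : τ.SameCycle d e) : τ.SameCycle (dartRev α d) (dartRev α e) := by
  obtain ⟨j, rfl⟩ := h
  exact ⟨-j, (dartRev_zpow hrev j d).symm⟩

/-- No orbit contains a dart together with its reverse: if `τ ^ m` took `d` to its reverse,
then at the midpoint of the path from `d` to its reverse there would be a dart equal to its own
reverse (`m` even), or one sent by `τ` to its own reverse (`m` odd). -/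
lemma not_sameCycle_dartRev {τ : Equiv.Perm (α × Bool)}
    (hrev : ∀ d, τ (dartRev α (τ d)) = dartRev α d) (hne : ∀ d, τ d ≠ dartRev α d)
    (d : α × Bool) : ¬ τ.SameCycle d (dartRev α d) := by
  rintro ⟨m, hm⟩
  obtain ⟨j, rfl | rfl⟩ := Int.even_or_odd' m
  · have h : dartRev α ((τ ^ j) d) = (τ ^ j) d := by
      rw [dartRev_zpow hrev, ← hm, ← Equiv.Perm.mul_apply, ← zpow_add]
      congr 2; ring
    have := congrArg Prod.snd h
    simp [dartRev_apply] at this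
  · have h : dartRev α ((τ ^ j) d) = τ ((τ ^ j) d) := by
      rw [dartRev_zpow hrev, ← hm, ← Equiv.Perm.mul_apply, ← zpow_add, ← Equiv.Perm.mul_apply,
        ← zpow_one_add]
      congr 2; ring
    exact hne _ h.symm

/-- The equivalence relation on edges whose classes are the circuits of `P_t`: two edges are
related when some dart of the one and some dart of the other lie in the same orbit. -/
def circuitSetoid (τ : Equiv.Perm (α × Bool))
    (hrev : ∀ d, τ (dartRev α (τ d)) = dartRev α d) : Setoid α where
  r p q := ∃ ε δ, τ.SameCycle (p, ε) (q, δ)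
  iseqv :=
    { refl := fun p => ⟨true, true, .refl _ _⟩
      symm := fun ⟨ε, δ, h⟩ => ⟨δ, ε, h.symm⟩
      trans := by
        rintro p q r ⟨ε, δ, h⟩ ⟨δ', γ, h'⟩
        by_cases e : δ = δ'
        · subst e; exact ⟨ε, γ, h.trans h'⟩
        · have hrevd := sameCycle_dartRev hrev h'
          have : (!δ') = δ := by cases δ <;> cases δ' <;> simp_all
          simp only [dartRev_apply, this] at hrevd
          exact ⟨ε, !γ, h.trans hrevd⟩ }

/-- Every circuit is traversed by exactly two orbits of darts, one in each direction. -/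
lemma orbitCount_eq_two_mul (τ : Equiv.Perm (α × Bool))
    (hrev : ∀ d, τ (dartRev α (τ d)) = dartRev α d) (hne : ∀ d, τ d ≠ dartRev α d) :
    orbitCount τ = 2 * Nat.card (Quotient (circuitSetoid τ hrev)) := by
  let F : Quotient (circuitSetoid τ hrev) × Bool → Quotient (sameCycleSetoid τ) :=
    fun x => Quotient.mk _ (x.1.out, x.2)
  have hF : Function.Bijective F := by
    constructor
    · rintro ⟨q, ε⟩ ⟨q', ε'⟩ h
      have h1 : τ.SameCycle (q.out, ε) (q'.out, ε') := Quotient.exact h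
      have hq : q = q' := by
        rw [← q.out_eq, ← q'.out_eq]
        exact Quotient.sound ⟨ε, ε', h1⟩
      subst hq
      by_cases e : ε = ε'
      · rw [e]
      · exfalso
        have e' : ε' = !ε := by cases ε <;> cases ε' <;> simp_all
        rw [e'] at h1
        exact not_sameCycle_dartRev hrev hne _ h1
    · intro y
      induction y using Quotient.inductionOn with
      | h d =>
        obtain ⟨p, δ⟩ := d
        obtain ⟨ε, γ, h⟩ : ∃ ε γ, τ.SameCycle
            ((Quotient.mk (circuitSetoid τ hrev) p).out, ε) (p, γ) :=
          Quotient.exact (Quotient.out_eq (Quotient.mk (circuitSetoid τ hrev) p))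
        by_cases e : γ = δ
        · subst e
          exact ⟨(Quotient.mk _ p, ε), Quotient.sound h⟩
        · have e' : (!γ) = δ := by cases γ <;> cases δ <;> simp_all
          have h' := sameCycle_dartRev hrev h
          simp only [dartRev_apply, e'] at h'
          exact ⟨(Quotient.mk _ p, !ε), Quotient.sound h'⟩
  rw [orbitCount, ← Nat.card_eq_of_bijective F hF, Nat.card_prod, mul_comm]
  simp

lemma invariant_of_sameCycle [Finite α] {β : Type*} {τ : Equiv.Perm (α × Bool)} {f : α → β}
    (hf : ∀ d, f (τ d).1 = f d.1) {d e : α × Bool} (h : τ.SameCycle d e) : f d.1 = f e.1 := by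
  have key : ∀ k : ℕ, f ((τ ^ k) d).1 = f d.1 := by
    intro k
    induction k with
    | zero => simp
    | succ k ih => rw [pow_succ', Equiv.Perm.mul_apply, hf, ih]
  obtain ⟨k, -, rfl⟩ := h.exists_pow_eq'
  exact (key k).symm

/-- Binary edge labellings that are constant on circuits: there are `2 ^ |P_t|` of them. -/
lemma card_invariant [Finite α] (τ : Equiv.Perm (α × Bool))
    (hrev : ∀ d, τ (dartRev α (τ d)) = dartRev α d) :
    Nat.card {f : α → ZMod 2 // ∀ d, f (τ d).1 = f d.1} =
      2 ^ Nat.card (Quotient (circuitSetoid τ hrev)) := by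
  let F : (Quotient (circuitSetoid τ hrev) → ZMod 2) →
      {f : α → ZMod 2 // ∀ d, f (τ d).1 = f d.1} :=
    fun h => ⟨fun p => h (Quotient.mk _ p), fun d => congrArg h (Quotient.sound
      ⟨(τ d).2, d.2, (Equiv.Perm.SameCycle.refl τ d).apply_left⟩)⟩
  have hF : Function.Bijective F := by
    constructor
    · intro h h' e
      funext q
      induction q using Quotient.inductionOn with
      | h p => exact congrFun (congrArg Subtype.val e) p
    · rintro ⟨f, hf⟩
      refine ⟨Quotient.lift f ?_, rfl⟩
      rintro p q ⟨ε, δ, h⟩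
      exact invariant_of_sameCycle hf h
  rw [← Nat.card_eq_of_bijective F hF, Nat.card_fun]
  simp

end DartReversal

/-! ### The word and its dart permutation -/

section Word

variable {n : ℕ}

lemma exists_other {w : Fin (2 * n) → Fin n} (hw : DoubleOccurrence w) (a : Fin (2 * n)) :
    ∃ b, a ≠ b ∧ w b = w a := by
  obtain ⟨x, y, hxy, h⟩ := Finset.card_eq_two.mp (hw (w a))
  have hx : w x = w a := by
    have : x ∈ ({x, y} : Finset _) := by simp
    rw [← h] at this; simpa using this
  have hy : w y = w a := by
    have : y ∈ ({x, y} : Finset _) := by simp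
    rw [← h] at this; simpa using this
  by_cases e : a = x
  · exact ⟨y, by rw [e]; exact hxy, hy⟩
  · exact ⟨x, e, hx⟩

lemma exists_pair {w : Fin (2 * n) → Fin n} (hw : DoubleOccurrence w) (v : Fin n) :
    ∃ a b, a ≠ b ∧ w a = v ∧ w b = v := by
  have h0 : (Finset.univ.filter fun p => w p = v).Nonempty := by
    rw [← Finset.card_pos, hw v]; norm_num
  obtain ⟨a, ha⟩ := h0
  have ha : w a = v := by simpa using ha
  obtain ⟨b, hab, hb⟩ := exists_other hw a
  exact ⟨a, b, hab, ha, hb.trans ha⟩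

lemma filter_eq_pair {w : Fin (2 * n) → Fin n} (hw : DoubleOccurrence w) {v : Fin n}
    {a b : Fin (2 * n)} (hab : a ≠ b) (ha : w a = v) (hb : w b = v) :
    (Finset.univ.filter fun p => w p = v) = {a, b} := by
  symm
  apply Finset.eq_of_subset_of_card_le
  · intro x hx
    simp only [Finset.mem_insert, Finset.mem_singleton] at hx
    rcases hx with rfl | rfl <;> simp [ha, hb]
  · rw [hw v, Finset.card_pair hab]

lemma eq_or_eq {w : Fin (2 * n) → Fin n} (hw : DoubleOccurrence w) {v : Fin n}
    {a b c : Fin (2 * n)} (hab : a ≠ b) (ha : w a = v) (hb : w b = v) (hc : w c = v) :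
    c = a ∨ c = b := by
  have : c ∈ Finset.univ.filter fun p => w p = v := by simpa using hc
  rw [filter_eq_pair hw hab ha hb] at this
  simpa using this

/-- Every dart arrives at some position `a` of the word: it is `(a - 1, +)` or `(a, -)`. -/
lemma dart_cases (hn : 0 < n) (d : Fin (2 * n) × Bool) :
    ∃ a, d = (a - pos1 hn, true) ∨ d = (a, false) := by
  have : NeZero (2 * n) := ⟨by omega⟩
  obtain ⟨p, ε⟩ := d
  cases ε
  · exact ⟨p, Or.inr rfl⟩
  · exact ⟨p + pos1 hn, Or.inl (by rw [add_sub_cancel_right])⟩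

lemma dartPerm_rev {hn : 0 < n} {w : Fin (2 * n) → Fin n} (hw : DoubleOccurrence w)
    {t : Fin n → Transition} {τ : Equiv.Perm (Fin (2 * n) × Bool)} (hτ : IsDartPerm hn w t τ)
    (d : Fin (2 * n) × Bool) : τ (dartRev _ (τ d)) = dartRev _ d := by
  obtain ⟨a, h⟩ := dart_cases hn d
  obtain ⟨b, hab, hb⟩ := exists_other hw a
  obtain ⟨h1, h2, h3⟩ := hτ (w a) a b hab rfl hb
  cases hv : t (w a)
  · obtain ⟨e1, e2, e3, e4⟩ := h1 hv
    rcases h with rfl | rfl <;> simp [dartRev_apply, e1, e3]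
  · obtain ⟨e1, e2, e3, e4⟩ := h2 hv
    rcases h with rfl | rfl <;> simp [dartRev_apply, e1, e2, e3, e4]
  · obtain ⟨e1, e2, e3, e4⟩ := h3 hv
    rcases h with rfl | rfl <;> simp [dartRev_apply, e1, e2, e3, e4]

lemma dartPerm_ne_rev {hn : 0 < n} {w : Fin (2 * n) → Fin n} (hw : DoubleOccurrence w)
    {t : Fin n → Transition} {τ : Equiv.Perm (Fin (2 * n) × Bool)} (hτ : IsDartPerm hn w t τ)
    (d : Fin (2 * n) × Bool) : τ d ≠ dartRev _ d := by
  have : NeZero (2 * n) := ⟨by omega⟩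
  obtain ⟨a, h⟩ := dart_cases hn d
  obtain ⟨b, hab, hb⟩ := exists_other hw a
  obtain ⟨h1, h2, h3⟩ := hτ (w a) a b hab rfl hb
  have hab' : b - pos1 hn ≠ a - pos1 hn := fun h => hab (sub_left_injective h).symm
  cases hv : t (w a)
  · obtain ⟨e1, e2, e3, e4⟩ := h1 hv
    rcases h with rfl | rfl <;> simp [dartRev_apply, e1, e3]
  · obtain ⟨e1, e2, e3, e4⟩ := h2 hv
    rcases h with rfl | rfl <;> simp [dartRev_apply, e1, e3]
  · obtain ⟨e1, e2, e3, e4⟩ := h3 hv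
    rcases h with rfl | rfl
    · simp [dartRev_apply, e1, hab']
    · simp [dartRev_apply, e3, hab.symm]

/-- The condition that a transition imposes on an edge labelling `f` at a vertex with
occurrences `a` and `b` in order that `f` be constant on circuits. -/
def LocalCond (hn : 0 < n) (f : Fin (2 * n) → ZMod 2) (a b : Fin (2 * n)) : Transition → Prop
  | .follow => f a = f (a - pos1 hn) ∧ f b = f (b - pos1 hn)
  | .cross => f b = f (a - pos1 hn) ∧ f a = f (b - pos1 hn)
  | .reverse => f b = f a ∧ f (b - pos1 hn) = f (a - pos1 hn)

lemma invariant_iff {hn : 0 < n} {w : Fin (2 * n) → Fin n} (hw : DoubleOccurrence w)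
    {t : Fin n → Transition} {τ : Equiv.Perm (Fin (2 * n) × Bool)} (hτ : IsDartPerm hn w t τ)
    (f : Fin (2 * n) → ZMod 2) :
    (∀ d, f (τ d).1 = f d.1) ↔
      ∀ v a b, a ≠ b → w a = v → w b = v → LocalCond hn f a b (t v) := by
  constructor
  · intro hf v a b hab ha hb
    obtain ⟨h1, h2, h3⟩ := hτ v a b hab ha hb
    have f1 := hf (a - pos1 hn, true)
    have f2 := hf (b - pos1 hn, true)
    have f3 := hf (a, false)
    cases hv : t v
    · obtain ⟨e1, e2, e3, e4⟩ := h1 hv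
      rw [e1] at f1; rw [e2] at f2
      exact ⟨f1, f2⟩
    · obtain ⟨e1, e2, e3, e4⟩ := h2 hv
      rw [e1] at f1; rw [e2] at f2
      exact ⟨f1, f2⟩
    · obtain ⟨e1, e2, e3, e4⟩ := h3 hv
      rw [e1] at f1; rw [e3] at f3
      exact ⟨f3, f1⟩
  · intro H d
    obtain ⟨a, h⟩ := dart_cases hn d
    obtain ⟨b, hab, hb⟩ := exists_other hw a
    obtain ⟨h1, h2, h3⟩ := hτ (w a) a b hab rfl hb
    have HL := H (w a) a b hab rfl hb
    cases hv : t (w a) <;> rw [hv] at HL <;> obtain ⟨l1, l2⟩ := HL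
    · obtain ⟨e1, e2, e3, e4⟩ := h1 hv
      rcases h with rfl | rfl
      · rw [e1]; exact l1
      · rw [e3]; exact l1.symm
    · obtain ⟨e1, e2, e3, e4⟩ := h2 hv
      rcases h with rfl | rfl
      · rw [e1]; exact l1
      · rw [e3]; exact l2.symm
    · obtain ⟨e1, e2, e3, e4⟩ := h3 hv
      rcases h with rfl | rfl
      · rw [e1]; exact l2
      · rw [e3]; exact l1

/-! ### Edge labellings obtained by summation along the word -/

/-- The edge labelling with value `c` on the last edge, whose value changes by `y v` at each
passage of the word through the vertex `v`. -/
def potential (w : Fin (2 * n) → Fin n) (c : ZMod 2) (y : Fin n → ZMod 2) (p : Fin (2 * n)) :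
    ZMod 2 :=
  c + ∑ q ∈ Finset.Iic p, y (w q)

lemma sum_word {w : Fin (2 * n) → Fin n} (hw : DoubleOccurrence w) (y : Fin n → ZMod 2) :
    ∑ q, y (w q) = 0 := by
  rw [← Finset.sum_fiberwise Finset.univ w]
  apply Finset.sum_eq_zero
  intro v _
  rw [Finset.sum_congr rfl (g := fun _ => y v) (fun q hq => by rw [(Finset.mem_filter.mp hq).2])]
  rw [Finset.sum_const, hw v]
  exact CharTwo.two_nsmul _

lemma val_sub_pos1 (hn : 0 < n) {p : Fin (2 * n)} (hp : p.val ≠ 0) :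
    (p - pos1 hn).val = p.val - 1 := by
  rw [Fin.sub_val_of_le] <;> simp [pos1, Fin.le_def]; omega

lemma val_sub_pos1_zero (hn : 0 < n) {p : Fin (2 * n)} (hp : p.val = 0) :
    (p - pos1 hn).val = 2 * n - 1 := by
  rw [Fin.sub_def]
  simp only [pos1, hp, add_zero]
  exact Nat.mod_eq_of_lt (by omega)

lemma potential_last (hn : 0 < n) {w : Fin (2 * n) → Fin n} (hw : DoubleOccurrence w)
    (c : ZMod 2) (y : Fin n → ZMod 2) {p : Fin (2 * n)} (hp : p.val = 2 * n - 1) :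
    potential w c y p = c := by
  have : Finset.Iic p = Finset.univ := by
    ext q; simp [Fin.le_def, hp]; omega
  rw [potential, this, sum_word hw, add_zero]

lemma potential_jump (hn : 0 < n) {w : Fin (2 * n) → Fin n} (hw : DoubleOccurrence w)
    (c : ZMod 2) (y : Fin n → ZMod 2) (p : Fin (2 * n)) :
    potential w c y p = potential w c y (p - pos1 hn) + y (w p) := by
  by_cases hp : p.val = 0
  · rw [potential_last hn hw c y (val_sub_pos1_zero hn hp), potential]
    have : Finset.Iic p = {p} := by
      ext q; simp [Fin.le_def, Fin.ext_iff, hp]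
    rw [this, Finset.sum_singleton]
  · have : Finset.Iic p = insert p (Finset.Iic (p - pos1 hn)) := by
      ext q
      rw [Finset.mem_insert, Finset.mem_Iic, Finset.mem_Iic, Fin.le_def, Fin.le_def, Fin.ext_iff,
        val_sub_pos1 hn hp]
      omega
    rw [potential, this, Finset.sum_insert (by
      rw [Finset.mem_Iic, Fin.le_def, val_sub_pos1 hn hp]; omega), potential]
    ring

lemma eq_of_jump (hn : 0 < n) {f g : Fin (2 * n) → ZMod 2}
    (hlast : f ⟨2 * n - 1, by omega⟩ = g ⟨2 * n - 1, by omega⟩)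
    (h : ∀ p, f p - f (p - pos1 hn) = g p - g (p - pos1 hn)) : f = g := by
  have key : ∀ (k : ℕ) (p : Fin (2 * n)), p.val = k → f p = g p := by
    intro k
    induction k with
    | zero =>
      intro p hp
      have e : p - pos1 hn = ⟨2 * n - 1, by omega⟩ := Fin.ext (val_sub_pos1_zero hn hp)
      have := h p
      rw [e, hlast] at this
      exact sub_left_injective this
    | succ k ih =>
      intro p hp
      have := h p
      rw [ih (p - pos1 hn) (by rw [val_sub_pos1 hn] <;> omega)] at this
      exact sub_left_injective this
  funext p
  exact key _ p rfl

/-- Between two occurrences `a < b` of `v`, a vertex `u ≠ v` occurs an odd number of times exactly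
when it is interlaced with `v`. -/
lemma card_between {w : Fin (2 * n) → Fin n} (hw : DoubleOccurrence w) {v u : Fin n}
    {a b : Fin (2 * n)} (hab : a < b) (ha : w a = v) (hb : w b = v) (huv : u ≠ v) :
    ((((Finset.Ioc a b).filter fun q => w q = u).card : ℕ) : ZMod 2) =
      if Interlaced w v u then 1 else 0 := by
  have e : ((Finset.Ioc a b).filter fun q => w q = u) =
      Finset.univ.filter fun r => a < r ∧ r < b ∧ w r = u := by
    ext q
    simp only [Finset.mem_filter, Finset.mem_Ioc, Finset.mem_univ, true_and]
    constructor
    · rintro ⟨⟨h1, h2⟩, h3⟩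
      refine ⟨h1, lt_of_le_of_ne h2 ?_, h3⟩
      rintro rfl; exact huv (h3.symm.trans hb)
    · rintro ⟨h1, h2, h3⟩
      exact ⟨⟨h1, h2.le⟩, h3⟩
  rw [e]
  have hle : (Finset.univ.filter fun r => a < r ∧ r < b ∧ w r = u).card ≤ 2 := by
    refine le_of_le_of_eq ?_ (hw u)
    apply Finset.card_le_card
    intro q
    simp only [Finset.mem_filter, Finset.mem_univ, true_and]
    exact fun h => h.2.2
  have hI : Interlaced w v u ↔ (Finset.univ.filter fun r => a < r ∧ r < b ∧ w r = u).card = 1 := by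
    constructor
    · intro h; exact h.2 a b hab ha hb
    · intro h
      refine ⟨huv.symm, fun p q hpq hp hq => ?_⟩
      have hp' := eq_or_eq hw hab.ne ha hb hp
      have hq' := eq_or_eq hw hab.ne ha hb hq
      have : p = a ∧ q = b := by
        rcases hp' with rfl | rfl <;> rcases hq' with rfl | rfl
        · exact absurd hpq (lt_irrefl _)
        · exact ⟨rfl, rfl⟩
        · exact absurd hpq hab.asymm
        · exact absurd hpq (lt_irrefl _)
      rw [this.1, this.2]; exact h
  simp only [hI]
  generalize (Finset.univ.filter fun r => a < r ∧ r < b ∧ w r = u).card = k at hle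
  interval_cases k
  · simp
  · simp
  · simp; rfl

lemma potential_diff_of_lt {w : Fin (2 * n) → Fin n} (hw : DoubleOccurrence w)
    (c : ZMod 2) (y : Fin n → ZMod 2) {v : Fin n} {a b : Fin (2 * n)} (hab : a < b)
    (ha : w a = v) (hb : w b = v) :
    potential w c y b = potential w c y a + (y v + (interlaceMatrix w).mulVec y v) := by
  have hsplit : Finset.Iic b = Finset.Iic a ∪ Finset.Ioc a b := by
    ext q
    rw [Finset.mem_union, Finset.mem_Iic, Finset.mem_Iic, Finset.mem_Ioc]
    omega
  have hdisj : Disjoint (Finset.Iic a) (Finset.Ioc a b) := by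
    rw [Finset.disjoint_left]; intro q
    rw [Finset.mem_Iic, Finset.mem_Ioc]; omega
  rw [potential, potential, hsplit, Finset.sum_union hdisj, ← add_assoc]
  congr 1
  rw [← Finset.sum_fiberwise (Finset.Ioc a b) w]
  have h1 : ∀ u, ∑ q ∈ (Finset.Ioc a b).filter (fun q => w q = u), y (w q) =
      (if u = v then y v else 0) + interlaceMatrix w v u * y u := by
    intro u
    rw [Finset.sum_congr rfl (g := fun _ => y u)
      (fun q hq => by rw [(Finset.mem_filter.mp hq).2]), Finset.sum_const, nsmul_eq_mul]
    by_cases huv : u = v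
    · subst huv
      have : ((Finset.Ioc a b).filter fun q => w q = u) = {b} := by
        ext q
        simp only [Finset.mem_filter, Finset.mem_Ioc, Finset.mem_singleton]
        constructor
        · rintro ⟨⟨h1, h2⟩, h3⟩
          rcases eq_or_eq hw hab.ne ha hb h3 with rfl | rfl
          · exact absurd h1 (lt_irrefl _)
          · rfl
        · rintro rfl; exact ⟨⟨hab, le_rfl⟩, hb⟩
      rw [this]
      simp [interlaceMatrix, Interlaced]
    · rw [card_between hw hab ha hb huv]
      simp [interlaceMatrix, huv]
  rw [Finset.sum_congr rfl (fun u _ => h1 u), Finset.sum_add_distrib]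
  simp [Matrix.mulVec, dotProduct]

/-- The change of the potential between the two occurrences of `v`: everything met an even
number of times cancels, leaving `y v` and the vertices interlaced with `v`. -/
lemma potential_diff {w : Fin (2 * n) → Fin n} (hw : DoubleOccurrence w)
    (c : ZMod 2) (y : Fin n → ZMod 2) {v : Fin n} {a b : Fin (2 * n)} (hab : a ≠ b)
    (ha : w a = v) (hb : w b = v) :
    potential w c y b = potential w c y a + (y v + (interlaceMatrix w).mulVec y v) := by
  rcases lt_or_gt_of_ne hab with h | h
  · exact potential_diff_of_lt hw c y h ha hb
  · rw [potential_diff_of_lt hw c y h hb ha, add_assoc, CharTwo.add_self_eq_zero, add_zero]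

/-! ### Invariant labellings and the kernel of the transition matrix -/

/-- Extension by zero of a vector indexed by the vertices that are not followed. -/
noncomputable def extendZero (t : Fin n → Transition)
    (x : {v : Fin n // t v ≠ Transition.follow} → ZMod 2) (v : Fin n) : ZMod 2 :=
  if h : t v ≠ Transition.follow then x ⟨v, h⟩ else 0

lemma transMatrix_mulVec (w : Fin (2 * n) → Fin n) (t : Fin n → Transition)
    (x : {v : Fin n // t v ≠ Transition.follow} → ZMod 2)
    (v : {v : Fin n // t v ≠ Transition.follow}) :
    (transMatrix w t).mulVec x v =
      (if t v.1 = Transition.reverse then x v else 0) +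
        (interlaceMatrix w).mulVec (extendZero t x) v.1 := by
  have h1 : (interlaceMatrix w).mulVec (extendZero t x) v.1 =
      ∑ u : {v : Fin n // t v ≠ Transition.follow}, interlaceMatrix w v.1 u.1 * x u := by
    rw [Matrix.mulVec, dotProduct,
      ← Fintype.sum_subtype_add_sum_subtype (fun u => t u ≠ Transition.follow)]
    rw [Finset.sum_congr rfl (g := fun u : {v : Fin n // t v ≠ Transition.follow} =>
        interlaceMatrix w v.1 u.1 * x u) (fun u _ => by rw [extendZero, dif_pos u.2]),
      add_eq_left]
    exact Finset.sum_eq_zero fun u _ => by rw [extendZero, dif_neg u.2, mul_zero]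
  have h2 : ∀ u, transMatrix w t v u * x u =
      (if u = v then (if t v.1 = Transition.reverse then x v else 0) else 0) +
        interlaceMatrix w v.1 u.1 * x u := by
    intro u
    by_cases huv : u = v
    · subst huv
      by_cases hr : t u.1 = Transition.reverse <;>
        simp [transMatrix, interlaceMatrix, Interlaced, hr]
    · simp [transMatrix, interlaceMatrix, huv, Ne.symm huv]
  rw [h1, Matrix.mulVec, dotProduct, Finset.sum_congr rfl (fun u _ => h2 u),
    Finset.sum_add_distrib]
  simp

/-- A potential is constant on circuits exactly when its vector of jumps is in the kernel of
`I_t(w)`. -/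
lemma potential_invariant_iff {hn : 0 < n} {w : Fin (2 * n) → Fin n} (hw : DoubleOccurrence w)
    {t : Fin n → Transition} {τ : Equiv.Perm (Fin (2 * n) × Bool)} (hτ : IsDartPerm hn w t τ)
    (c : ZMod 2) (x : {v : Fin n // t v ≠ Transition.follow} → ZMod 2) :
    (∀ d, potential w c (extendZero t x) (τ d).1 = potential w c (extendZero t x) d.1) ↔
      (transMatrix w t).mulVec x = 0 := by
  rw [invariant_iff hw hτ]
  have hloc : ∀ v a b, a ≠ b → w a = v → w b = v →
      (LocalCond hn (potential w c (extendZero t x)) a b (t v) ↔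
        ∀ h : t v ≠ Transition.follow, (transMatrix w t).mulVec x ⟨v, h⟩ = 0) := by
    intro v a b hab ha hb
    have ja := potential_jump hn hw c (extendZero t x) a
    have jb := potential_jump hn hw c (extendZero t x) b
    have jd := potential_diff hw c (extendZero t x) hab ha hb
    rw [ha] at ja
    rw [hb] at jb
    by_cases h : t v = Transition.follow
    · have hz : extendZero t x v = 0 := by rw [extendZero, dif_neg (by simp [h])]
      rw [hz, add_zero] at ja jb
      simp [h, LocalCond, ← ja, ← jb]
    · have hx : x ⟨v, h⟩ = extendZero t x v := by rw [extendZero, dif_pos h]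
      have hM := transMatrix_mulVec w t x ⟨v, h⟩
      simp only [hx] at hM
      have hM' : (∀ h : t v ≠ Transition.follow, (transMatrix w t).mulVec x ⟨v, h⟩ = 0) ↔
          (transMatrix w t).mulVec x ⟨v, h⟩ = 0 := ⟨fun H => H h, fun H _ => H⟩
      rw [hM', hM]
      cases hv : t v
      · exact absurd hv h
      · simp only [LocalCond, reduceCtorEq, if_false]
        -- What remains is a statement about six elements of `GF(2)`.
        revert ja jb jd
        generalize (interlaceMatrix w).mulVec (extendZero t x) v = s
        generalize extendZero t x v = z
        generalize potential w c (extendZero t x) (a - pos1 hn) = A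
        generalize potential w c (extendZero t x) (b - pos1 hn) = B
        generalize potential w c (extendZero t x) a = A'
        generalize potential w c (extendZero t x) b = B'
        clear * -
        revert s z A B A' B'
        decide
      · simp only [LocalCond, if_true]
        revert ja jb jd
        generalize (interlaceMatrix w).mulVec (extendZero t x) v = s
        generalize extendZero t x v = z
        generalize potential w c (extendZero t x) (a - pos1 hn) = A
        generalize potential w c (extendZero t x) (b - pos1 hn) = B
        generalize potential w c (extendZero t x) a = A'
        generalize potential w c (extendZero t x) b = B'
        clear * -
        revert s z A B A' B'
        decide
  constructor
  · intro H
    funext v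
    obtain ⟨a, b, hab, ha, hb⟩ := exists_pair hw v.1
    exact (hloc v.1 a b hab ha hb).mp (H v.1 a b hab ha hb) v.2
  · intro H v a b hab ha hb
    rw [hloc v a b hab ha hb, H]
    exact fun _ => rfl

lemma jump_eq {hn : 0 < n} {f : Fin (2 * n) → ZMod 2} {a b : Fin (2 * n)} {s : Transition}
    (h : LocalCond hn f a b s) : f a - f (a - pos1 hn) = f b - f (b - pos1 hn) := by
  cases s <;> obtain ⟨h1, h2⟩ := h
  · rw [h1, h2, sub_self, sub_self]
  · rw [h1, h2, CharTwo.sub_eq_add, CharTwo.sub_eq_add, add_comm]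
  · rw [h1, h2]

lemma card_ker (w : Fin (2 * n) → Fin n) (t : Fin n → Transition) :
    Nat.card {x : {v : Fin n // t v ≠ Transition.follow} → ZMod 2 //
      (transMatrix w t).mulVec x = 0} = 2 ^ nullity (transMatrix w t) := by
  have h1 := Module.natCard_eq_pow_finrank (K := ZMod 2)
    (V := LinearMap.ker (transMatrix w t).mulVecLin)
  have h2 := (transMatrix w t).mulVecLin.finrank_range_add_finrank_ker
  rw [Module.finrank_fintype_fun_eq_card] at h2
  have h3 : nullity (transMatrix w t) =
      Module.finrank (ZMod 2) (LinearMap.ker (transMatrix w t).mulVecLin) := by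
    rw [nullity, Matrix.rank]; omega
  rw [Nat.card_zmod, ← h3] at h1
  exact h1

/-- Edge labellings constant on circuits correspond to pairs of a value on the last edge and a
kernel vector of `I_t(w)`. -/
lemma card_invariant_eq {hn : 0 < n} {w : Fin (2 * n) → Fin n} (hw : DoubleOccurrence w)
    {t : Fin n → Transition} {τ : Equiv.Perm (Fin (2 * n) × Bool)} (hτ : IsDartPerm hn w t τ) :
    Nat.card {f : Fin (2 * n) → ZMod 2 // ∀ d, f (τ d).1 = f d.1} =
      2 ^ (nullity (transMatrix w t) + 1) := by
  let F : ZMod 2 × {x : {v : Fin n // t v ≠ Transition.follow} → ZMod 2 //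
      (transMatrix w t).mulVec x = 0} →
      {f : Fin (2 * n) → ZMod 2 // ∀ d, f (τ d).1 = f d.1} :=
    fun z => ⟨potential w z.1 (extendZero t z.2.1),
      (potential_invariant_iff hw hτ z.1 z.2.1).mpr z.2.2⟩
  have hF : Function.Bijective F := by
    constructor
    · rintro ⟨c, x, hx⟩ ⟨c', x', hx'⟩ h
      have h : potential w c (extendZero t x) = potential w c' (extendZero t x') :=
        congrArg Subtype.val h
      have hc : c = c' := by
        have := congrFun h ⟨2 * n - 1, by omega⟩
        rwa [potential_last hn hw _ _ rfl, potential_last hn hw _ _ rfl] at this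
      have hxx : x = x' := by
        funext v
        obtain ⟨a, b, hab, ha, hb⟩ := exists_pair hw v.1
        have j := potential_jump hn hw c (extendZero t x) a
        have j' := potential_jump hn hw c' (extendZero t x') a
        rw [h] at j
        have := add_left_cancel (j.symm.trans j')
        rwa [ha, extendZero, extendZero, dif_pos v.2, dif_pos v.2] at this
      subst hc hxx
      rfl
    · rintro ⟨f, hf⟩
      have hloc := (invariant_iff hw hτ f).mp hf
      choose α β hαβ hα hβ using exists_pair hw
      let x : {v : Fin n // t v ≠ Transition.follow} → ZMod 2 :=
        fun v => f (α v.1) - f (α v.1 - pos1 hn)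
      have hy : ∀ p, extendZero t x (w p) = f p - f (p - pos1 hn) := by
        intro p
        have hj := jump_eq (hloc (w p) _ _ (hαβ _) (hα _) (hβ _))
        have hfa : f (α (w p)) - f (α (w p) - pos1 hn) = f p - f (p - pos1 hn) := by
          rcases eq_or_eq hw (hαβ (w p)) (hα _) (hβ _) (rfl : w p = w p) with e | e
          · rw [← e]
          · rw [hj, ← e]
        by_cases h : t (w p) = Transition.follow
        · rw [extendZero, dif_neg (by simp [h]), ← hfa]
          have := hloc (w p) _ _ (hαβ _) (hα _) (hβ _)
          rw [h] at this
          rw [this.1, sub_self]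
        · rw [extendZero, dif_pos h]
          exact hfa
      have hpot : potential w (f ⟨2 * n - 1, by omega⟩) (extendZero t x) = f := by
        apply eq_of_jump hn
        · exact potential_last hn hw _ _ rfl
        · intro p
          rw [potential_jump hn hw _ _ p, hy, add_sub_cancel_left]
      refine ⟨(f ⟨2 * n - 1, by omega⟩, ⟨x, ?_⟩), Subtype.ext hpot⟩
      rw [← potential_invariant_iff hw hτ (f ⟨2 * n - 1, by omega⟩) x, hpot]
      exact hf
  rw [← Nat.card_eq_of_bijective F hF, Nat.card_prod, card_ker, Nat.card_zmod, pow_succ']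

end Word

/-- **Extended Cohn–Lempel equality (connected case).** For any transition assignment `t`
on a double occurrence word `w` on `n ≥ 1` vertices, the number of orbits of the dart
permutation `τ_t` is `2·(ν(I_t(w)) + 1)`; equivalently, the circuit partition `P_t`
determined by `t` (with `|P_t| = (number of orbits of τ_t)/2`) satisfies
`|P_t| = ν(I_t(w)) + 1`. -/
theorem extended_cohn_lempel_connected {n : ℕ} (hn : 0 < n) (w : Fin (2 * n) → Fin n)
    (hw : DoubleOccurrence w) (t : Fin n → Transition)
    (τ : Equiv.Perm (Fin (2 * n) × Bool)) (hτ : IsDartPerm hn w t τ) :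
    orbitCount τ = 2 * (nullity (transMatrix w t) + 1) ∧
      orbitCount τ / 2 = nullity (transMatrix w t) + 1 := by
  have hrev := dartPerm_rev hw hτ
  have h1 := orbitCount_eq_two_mul τ hrev (dartPerm_ne_rev hw hτ)
  have h2 := (card_invariant τ hrev).symm.trans (card_invariant_eq hw hτ)
  have h3 := Nat.pow_right_injective le_rfl h2
  rw [h1, h3]
  omega
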